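/- Let q be real with 0 < q < 1, let r ≥ 1 be an integer, let s, t ∈ ℂ with Re(t) > r − 1, and let z ∈ ℂ with Re(z) > 0. Then ζ_{q,r}(s,t,z) = ∑_{l=0}^{r−1} P^l_{q,r}(z) · ζ_{q,1}(s−l, t−l, z), where each series ζ_{q,1}(s−l, t−l, z) = ∑_{n≥0} q^{n(t−l)}/[n+z]_q^{s−l} converges absolutely because Re(t−l) > 0. -/

import Mathlib

/-!
Collect the tuples `(n₁, …, n_r)` by their sum `N`: with `r = n + 1` the multiple series becomes
`∑_N q^{Nt} / [N+z]^s · h_N(1, q⁻¹, …, q⁻ⁿ)`, where `h_N` is the complete homogeneous symmetric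
polynomial, and `h_N(1, q⁻¹, …, q⁻ⁿ) = ∏_{m=1}^n (q⁻ᴺ - q^m) / (1 - q^m)` is a Gaussian binomial
coefficient in base `q⁻¹`. Since `q⁻ᴺ - q^m = (1 - q) (q⁻ᴺ [N+z] - q^m [z-m])`, expanding this
product in powers of `q⁻ᴺ [N+z]` produces the coefficients `P^l_{q,r}(z)`, and the factor
`(q⁻ᴺ [N+z])^l` turns `q^{Nt} / [N+z]^s` into `q^{N(t-l)} / [N+z]^{s-l}`. As
`h_N(1, q⁻¹, …, q⁻ⁿ)` is a nonnegative real, the same identity shows that the norms are summable,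
which justifies the rearrangement.
-/

open Complex

/-- `[w]_q = (1 - q^w)/(1 - q)` for real `0 < q < 1` and complex `w`
(principal complex power of the positive real `q`). -/
noncomputable def qNum (q : ℝ) (w : ℂ) : ℂ := (1 - (q : ℂ) ^ w) / (1 - (q : ℂ))

/-- The q-factorial `[n]_q! = ∏_{k=1}^n [k]_q`. -/
noncomputable def qFact (q : ℝ) (n : ℕ) : ℝ := ∏ k ∈ Finset.Icc 1 n, (1 - q ^ k) / (1 - q)

/-- The coefficient `P^l_{q,r}(z)`: for `0 ≤ l ≤ r−1`,
`P^l_{q,r}(z) = ((−1)^{r−1−l}/[r−1]_q!) ∑_{1 ≤ m₁ < ⋯ < m_{r−1−l} ≤ r−1}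
q^{m₁+⋯+m_{r−1−l}} [z−m₁]_q ⋯ [z−m_{r−1−l}]_q`
(so that `P^{r−1}_{q,r}(z) = 1/[r−1]_q!`, the sum over the empty set being `1`). -/
noncomputable def Pq (q : ℝ) (r l : ℕ) (z : ℂ) : ℂ :=
  ((-1 : ℂ) ^ (r - 1 - l) / (qFact q (r - 1) : ℂ)) *
    ∑ A ∈ Finset.powersetCard (r - 1 - l) (Finset.Icc 1 (r - 1)),
      (q : ℂ) ^ (∑ m ∈ A, m) * ∏ m ∈ A, qNum q (z - (m : ℕ))

/-- The `q`-analogue `ζ_{q,r}(s,t,z)` of the Barnes multiple zeta function,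
defined as a sum over all `r`-tuples `(n₁,…,n_r)` of nonnegative integers of
`q^{n₁ t + n₂(t−1) + ⋯ + n_r(t−r+1)} / [n₁+⋯+n_r+z]_q^s`. -/
noncomputable def zetaQ (q : ℝ) (r : ℕ) (s t z : ℂ) : ℂ :=
  ∑' f : Fin r → ℕ,
    (q : ℂ) ^ (∑ i : Fin r, (f i : ℂ) * (t - (i : ℕ)))
      / (qNum q (((∑ i : Fin r, f i : ℕ) : ℂ) + z)) ^ s

section PrincipalHsymm

variable {R : Type*}

/-- The principal specialization `h_N(1, p, …, p^{k-1})` of the complete homogeneous symmetric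
polynomial of degree `N` in `k` variables. The monomials are indexed by their exponent vectors
`f : Fin k → ℕ`, as the terms of `zetaQ` are. -/
def principalHsymm [CommSemiring R] (p : R) (k N : ℕ) : R :=
  ∑ f ∈ Finset.Nat.antidiagonalTuple k N, p ^ ∑ i : Fin k, (i : ℕ) * f i

theorem sum_antidiagonalTuple_succ {M : Type*} [AddCommMonoid M] (k N : ℕ)
    (F : (Fin (k + 1) → ℕ) → M) :
    ∑ f ∈ Finset.Nat.antidiagonalTuple (k + 1) N, F f =
      ∑ a ∈ Finset.HasAntidiagonal.antidiagonal N,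
        ∑ f ∈ Finset.Nat.antidiagonalTuple k a.2, F (Fin.cons a.1 f) := by
  rw [Finset.sum_sigma']
  refine Finset.sum_bij' (fun f _ => ⟨(f 0, ∑ i, Fin.tail f i), Fin.tail f⟩)
    (fun x _ => Fin.cons x.1.1 x.2) ?_ ?_ ?_ ?_ ?_ <;>
  simp +contextual [Finset.Nat.mem_antidiagonalTuple, Fin.sum_univ_succ, Fin.tail]

theorem principalHsymm_succ [CommSemiring R] (p : R) (k N : ℕ) :
    principalHsymm p (k + 1) N =
      ∑ a ∈ Finset.HasAntidiagonal.antidiagonal N, p ^ a.2 * principalHsymm p k a.2 := by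
  simp only [principalHsymm, sum_antidiagonalTuple_succ, Finset.mul_sum]
  refine Finset.sum_congr rfl fun a _ => Finset.sum_congr rfl fun f hf => ?_
  rw [← pow_add, ← Finset.Nat.mem_antidiagonalTuple.1 hf, Fin.sum_univ_succ]
  simp [add_mul, Finset.sum_add_distrib, add_comm]

theorem principalHsymm_succ_succ [CommSemiring R] (p : R) (k N : ℕ) :
    principalHsymm p (k + 1) (N + 1) =
      principalHsymm p (k + 1) N + p ^ (N + 1) * principalHsymm p k (N + 1) := by
  rw [principalHsymm_succ, Finset.Nat.sum_antidiagonal_succ, principalHsymm_succ, add_comm]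

theorem principalHsymm_one [CommSemiring R] (p : R) (N : ℕ) : principalHsymm p 1 N = 1 := by
  simp [principalHsymm]

theorem principalHsymm_degree_zero [CommSemiring R] (p : R) (k : ℕ) : principalHsymm p k 0 = 1 := by
  simp [principalHsymm, Finset.Nat.antidiagonalTuple_zero_right]

theorem principalHsymm_mul_prod [CommRing R] (p : R) (n N : ℕ) :
    principalHsymm p (n + 1) N * ∏ m ∈ Finset.Icc 1 n, (1 - p ^ m) =
      ∏ m ∈ Finset.Icc 1 n, (1 - p ^ (N + m)) := by
  induction n generalizing N with
  | zero => simp [principalHsymm_one]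
  | succ n ihn =>
    induction N with
    | zero => simp [principalHsymm_degree_zero]
    | succ N ihN =>
      have shift : ∏ m ∈ Finset.Icc 1 (n + 1), (1 - p ^ (N + m)) =
          (1 - p ^ (N + 1)) * ∏ m ∈ Finset.Icc 1 n, (1 - p ^ (N + 1 + m)) := by
        simp only [← Finset.Ico_add_one_right_eq_Icc, Finset.prod_Ico_eq_prod_range,
          Nat.add_sub_cancel]
        rw [Finset.prod_range_succ', mul_comm]
        exact congrArg _ (Finset.prod_congr rfl fun m _ => by ring)
      calc principalHsymm p (n + 2) (N + 1) * ∏ m ∈ Finset.Icc 1 (n + 1), (1 - p ^ m)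
          = principalHsymm p (n + 2) N * ∏ m ∈ Finset.Icc 1 (n + 1), (1 - p ^ m) +
              p ^ (N + 1) * (1 - p ^ (n + 1)) *
                (principalHsymm p (n + 1) (N + 1) * ∏ m ∈ Finset.Icc 1 n, (1 - p ^ m)) := by
            rw [principalHsymm_succ_succ, Finset.prod_Icc_succ_top (Nat.le_add_left 1 n)]
            ring
        _ = (∏ m ∈ Finset.Icc 1 n, (1 - p ^ (N + 1 + m))) * (1 - p ^ (N + 1 + (n + 1))) := by
            rw [ihN, ihn, shift]
            ring
        _ = ∏ m ∈ Finset.Icc 1 (n + 1), (1 - p ^ (N + 1 + m)) :=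
            (Finset.prod_Icc_succ_top (Nat.le_add_left 1 n) _).symm

theorem principalHsymm_inv_eq_prod {K : Type*} [Field K] {q : K} (hq : q ≠ 0) {n : ℕ}
    (hqn : ∀ m ∈ Finset.Icc 1 n, q ^ m ≠ 1) (N : ℕ) :
    principalHsymm q⁻¹ (n + 1) N =
      ∏ m ∈ Finset.Icc 1 n, (q⁻¹ ^ N - q ^ m) / (1 - q ^ m) := by
  have prod_ne_zero : ∏ m ∈ Finset.Icc 1 n, (1 - q⁻¹ ^ m) ≠ 0 :=
    Finset.prod_ne_zero_iff.2 fun m hm =>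
      sub_ne_zero.2 fun h => hqn m hm <| inv_eq_one.1 <| by rw [← inv_pow, ← h]
  rw [eq_div_of_mul_eq prod_ne_zero (principalHsymm_mul_prod q⁻¹ n N), ← Finset.prod_div_distrib]
  refine Finset.prod_congr rfl fun m _ => ?_
  have num : q⁻¹ ^ N - q ^ m = -q ^ m * (1 - q⁻¹ ^ (N + m)) := by
    rw [inv_pow, inv_pow, pow_add]
    field_simp
    ring
  have den : 1 - q ^ m = -q ^ m * (1 - q⁻¹ ^ m) := by
    rw [inv_pow]
    field_simp
    ring
  rw [num, den, mul_div_mul_left _ _ (neg_ne_zero.2 (pow_ne_zero m hq))]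

theorem ofReal_principalHsymm (p : ℝ) (k N : ℕ) :
    ((principalHsymm p k N : ℝ) : ℂ) = principalHsymm (p : ℂ) k N := by
  simp [principalHsymm]

end PrincipalHsymm

theorem prod_sub_eq_sum_powersetCard {R ι : Type*} [CommRing R] (S : Finset ι) (x : R) (b : ι → R) :
    ∏ i ∈ S, (x - b i) = ∑ l ∈ Finset.range (S.card + 1),
      (-1) ^ (S.card - l) * (∑ A ∈ S.powersetCard (S.card - l), ∏ i ∈ A, b i) * x ^ l := by
  have vieta := congrArg (Polynomial.eval x) (Multiset.prod_X_sub_X_eq_sum_esymm (S.val.map b))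
  simp only [Multiset.map_map, Multiset.card_map, Finset.card_val, Finset.esymm_map_val] at vieta
  calc ∏ i ∈ S, (x - b i)
      = ∑ j ∈ Finset.range (S.card + 1),
          (-1) ^ j * ((∑ A ∈ S.powersetCard j, ∏ i ∈ A, b i) * x ^ (S.card - j)) := by
        simpa [Polynomial.eval_prod, Polynomial.eval_finsetSum] using vieta
    _ = _ := by
        rw [← Finset.sum_range_reflect]
        refine Finset.sum_congr rfl fun l hl => ?_
        have hl : l ≤ S.card := Nat.lt_succ_iff.1 (Finset.mem_range.1 hl)
        simp [Nat.sub_sub_self hl, mul_assoc]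

section Fiberwise

variable {α β E : Type*} [NormedAddCommGroup E] [NormedSpace ℝ E]
  {g : α → β} {S : β → Finset α} {w : α → ℝ} {F : β → E}

theorem summable_norm_smul_comp_of_fiberwise (hS : ∀ {a b}, a ∈ S b ↔ g a = b) (hw : ∀ a, 0 ≤ w a)
    (hF : Summable fun b => ‖(∑ a ∈ S b, w a) • F b‖) : Summable fun a => ‖w a • F (g a)‖ := by
  have partition (a : α) : ∃! b, a ∈ (S b : Set α) :=
    ⟨g a, Finset.mem_coe.2 (hS.2 rfl), fun b hb => (hS.1 (Finset.mem_coe.1 hb)).symm⟩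
  rw [summable_partition (fun a => norm_nonneg (w a • F (g a))) partition]
  refine ⟨fun b => (S b).summable (fun a => ‖w a • F (g a)‖), hF.congr fun b => ?_⟩
  rw [Finset.tsum_subtype' (S b) fun a => ‖w a • F (g a)‖, norm_smul,
    Real.norm_of_nonneg (Finset.sum_nonneg fun a _ => hw a), Finset.sum_mul]
  refine Finset.sum_congr rfl fun a ha => ?_
  rw [norm_smul, Real.norm_of_nonneg (hw a), hS.1 ha]

theorem tsum_smul_comp_eq_tsum_sum_smul [CompleteSpace E] (hS : ∀ {a b}, a ∈ S b ↔ g a = b)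
    (hw : ∀ a, 0 ≤ w a) (hF : Summable fun b => ‖(∑ a ∈ S b, w a) • F b‖) :
    ∑' a, w a • F (g a) = ∑' b, (∑ a ∈ S b, w a) • F b := by
  have fiber (b : β) : g ⁻¹' {b} = S b := Set.ext fun a => hS.symm
  rw [← ((summable_norm_smul_comp_of_fiberwise hS hw hF).of_norm.hasSum.tsum_fiberwise g).tsum_eq]
  refine tsum_congr fun b => ?_
  rw [fiber, Finset.tsum_subtype' (S b) fun a => w a • F (g a), Finset.sum_smul]
  exact Finset.sum_congr rfl fun a ha => by rw [hS.1 ha]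

end Fiberwise

section QNumber

variable {q : ℝ}

theorem norm_ofReal_cpow_lt_one (hq0 : 0 < q) (hq1 : q < 1) {w : ℂ} (hw : 0 < w.re) :
    ‖(q : ℂ) ^ w‖ < 1 := by
  rw [norm_cpow_eq_rpow_re_of_pos hq0]
  exact Real.rpow_lt_one hq0.le hq1 hw

theorem qNum_ne_zero (hq0 : 0 < q) (hq1 : q < 1) {w : ℂ} (hw : 0 < w.re) : qNum q w ≠ 0 := by
  refine div_ne_zero (fun h => ?_) (sub_ne_zero.2 <| mod_cast hq1.ne')
  simpa [← sub_eq_zero.1 h] using norm_ofReal_cpow_lt_one hq0 hq1 hw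

theorem tendsto_qNum_natCast_add (hq0 : 0 < q) (hq1 : q < 1) (z : ℂ) :
    Filter.Tendsto (fun N : ℕ => qNum q (N + z)) Filter.atTop (nhds ((1 - q)⁻¹ : ℝ)) := by
  have hpow : Filter.Tendsto (fun N : ℕ => (q : ℂ) ^ N) Filter.atTop (nhds 0) :=
    tendsto_pow_atTop_nhds_zero_of_norm_lt_one (by simpa [abs_of_pos hq0] using hq1)
  have hq : (q : ℂ) ≠ 0 := mod_cast hq0.ne'
  simpa [qNum, cpow_add _ _ hq] using
    ((hpow.mul_const ((q : ℂ) ^ z)).const_sub 1).div_const (1 - (q : ℂ))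

theorem cpow_neg_mul_qNum_add_sub (hq : q ≠ 0) (a b z : ℂ) :
    (q : ℂ) ^ (-a) * qNum q (a + z) - (q : ℂ) ^ b * qNum q (z - b) =
      ((q : ℂ) ^ (-a) - (q : ℂ) ^ b) / (1 - q) := by
  have hqC : (q : ℂ) ≠ 0 := ofReal_ne_zero.2 hq
  have expand : (q : ℂ) ^ (-a) * (1 - (q : ℂ) ^ (a + z)) - (q : ℂ) ^ b * (1 - (q : ℂ) ^ (z - b)) =
      (q : ℂ) ^ (-a) - (q : ℂ) ^ b := by
    simp only [mul_sub, ← cpow_add _ _ hqC]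
    ring_nf
  rw [qNum, qNum, mul_div_assoc', mul_div_assoc', ← sub_div, expand]

theorem sum_Pq_mul_pow (q : ℝ) (n : ℕ) (z x : ℂ) :
    ∑ l ∈ Finset.range (n + 1), Pq q (n + 1) l z * x ^ l =
      (∏ m ∈ Finset.Icc 1 n, (x - (q : ℂ) ^ m * qNum q (z - m))) / qFact q n := by
  rw [prod_sub_eq_sum_powersetCard, Nat.card_Icc, Nat.add_sub_cancel, Finset.sum_div]
  refine Finset.sum_congr rfl fun l _ => ?_
  simp only [Pq, Nat.add_sub_cancel, Finset.prod_mul_distrib, ← Finset.prod_pow_eq_pow_sum]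
  ring

theorem principalHsymm_inv_eq_sum_Pq (hq0 : 0 < q) (hq1 : q < 1) (n N : ℕ) (z : ℂ) :
    principalHsymm (q : ℂ)⁻¹ (n + 1) N =
      ∑ l ∈ Finset.range (n + 1), Pq q (n + 1) l z * ((q : ℂ)⁻¹ ^ N * qNum q (N + z)) ^ l := by
  have one_sub_ne_zero : 1 - (q : ℂ) ≠ 0 := sub_ne_zero.2 <| mod_cast hq1.ne'
  have pow_ne_one : ∀ m ∈ Finset.Icc 1 n, (q : ℂ) ^ m ≠ 1 := fun m hm => mod_cast
    (pow_lt_one₀ hq0.le hq1 (Nat.one_le_iff_ne_zero.1 (Finset.mem_Icc.1 hm).1)).ne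
  have hfact : (qFact q n : ℂ) = ∏ m ∈ Finset.Icc 1 n, (1 - (q : ℂ) ^ m) / (1 - q) := by
    simp [qFact]
  rw [principalHsymm_inv_eq_prod (mod_cast hq0.ne') pow_ne_one, sum_Pq_mul_pow, hfact,
    ← Finset.prod_div_distrib]
  refine Finset.prod_congr rfl fun m _ => ?_
  have hsub := cpow_neg_mul_qNum_add_sub hq0.ne' N m z
  rw [cpow_neg, cpow_natCast, cpow_natCast, ← inv_pow] at hsub
  rw [hsub, div_div_div_cancel_right₀ one_sub_ne_zero]

end QNumber

section ZetaQ

variable {q : ℝ}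

/-- The `N`-th term of the one-variable series `ζ_{q,1}(s,t,z) = ∑_N q^{Nt} / [N+z]_q^s`. -/
noncomputable def zetaQTerm (q : ℝ) (s t z : ℂ) (N : ℕ) : ℂ :=
  (q : ℂ) ^ ((N : ℂ) * t) / (qNum q ((N : ℂ) + z)) ^ s

theorem summable_norm_zetaQTerm (hq0 : 0 < q) (hq1 : q < 1) (s z : ℂ) {t : ℂ} (ht : 0 < t.re) :
    Summable fun N => ‖zetaQTerm q s t z N‖ := by
  have hpos : 0 < (1 - q)⁻¹ := inv_pos.2 (sub_pos.2 hq1)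
  have hden : Filter.Tendsto (fun N : ℕ => (qNum q (N + z) ^ s)⁻¹) Filter.atTop
      (nhds ((((1 - q)⁻¹ : ℝ) : ℂ) ^ s)⁻¹) :=
    .inv₀ ((tendsto_qNum_natCast_add hq0 hq1 z).cpow tendsto_const_nhds
      (ofReal_mem_slitPlane.2 hpos)) (cpow_ne_zero_iff.2 <| .inl <| mod_cast hpos.ne')
  have hnum : (fun N : ℕ => (q : ℂ) ^ (N * t)) =O[Filter.atTop] fun N => ‖(q : ℂ) ^ t‖ ^ N :=
    Asymptotics.isBigO_of_le _ fun N => by simp [cpow_nat_mul]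
  refine summable_of_isBigO_nat (summable_geometric_of_lt_one (norm_nonneg _)
    (norm_ofReal_cpow_lt_one hq0 hq1 ht)) (Asymptotics.isBigO_norm_left.2 ?_)
  exact (hnum.mul (hden.isBigO_one ℝ)).congr (fun N => (div_eq_mul_inv _ _).symm) fun N => mul_one _

theorem zetaQTerm_sub_natCast (hq : q ≠ 0) {z : ℂ} {N : ℕ} (hN : qNum q (N + z) ≠ 0) (s t : ℂ)
    (l : ℕ) :
    zetaQTerm q (s - l) (t - l) z N =
      zetaQTerm q s t z N * ((q : ℂ)⁻¹ ^ N * qNum q (N + z)) ^ l := by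
  have hqC : (q : ℂ) ≠ 0 := ofReal_ne_zero.2 hq
  have hNs : qNum q (N + z) ^ s ≠ 0 := cpow_ne_zero_iff.2 (.inl hN)
  rw [zetaQTerm, zetaQTerm, mul_sub, cpow_sub _ _ hqC, cpow_sub _ _ hN, cpow_natCast,
    ← Nat.cast_mul, cpow_natCast, mul_pow, ← pow_mul, inv_pow]
  field_simp

theorem principalHsymm_smul_zetaQTerm (hq0 : 0 < q) (hq1 : q < 1) {z : ℂ} {N : ℕ}
    (hN : qNum q (N + z) ≠ 0) (n : ℕ) (s t : ℂ) :
    principalHsymm q⁻¹ (n + 1) N • zetaQTerm q s t z N =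
      ∑ l ∈ Finset.range (n + 1), Pq q (n + 1) l z * zetaQTerm q (s - l) (t - l) z N := by
  simp only [zetaQTerm_sub_natCast hq0.ne' hN]
  rw [real_smul, ofReal_principalHsymm, ofReal_inv, principalHsymm_inv_eq_sum_Pq hq0 hq1 n N z,
    Finset.sum_mul]
  exact Finset.sum_congr rfl fun l _ => by ring

theorem cpow_sum_div_qNum_cpow (hq : q ≠ 0) {r : ℕ} (f : Fin r → ℕ) (s t z : ℂ) :
    (q : ℂ) ^ (∑ i : Fin r, (f i : ℂ) * (t - (i : ℕ)))
        / (qNum q (((∑ i : Fin r, f i : ℕ) : ℂ) + z)) ^ s =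
      (q⁻¹ ^ ∑ i : Fin r, (i : ℕ) * f i) • zetaQTerm q s t z (∑ i, f i) := by
  have exponent : ∑ i : Fin r, (f i : ℂ) * (t - (i : ℕ)) =
      ((∑ i, f i : ℕ) : ℂ) * t - ((∑ i : Fin r, (i : ℕ) * f i : ℕ) : ℂ) := by
    push_cast
    rw [Finset.sum_mul, ← Finset.sum_sub_distrib]
    exact Finset.sum_congr rfl fun i _ => by ring
  rw [exponent, cpow_sub _ _ (mod_cast hq), cpow_natCast, real_smul, zetaQTerm]
  push_cast
  rw [inv_pow]
  ring

theorem zetaQ_eq_tsum_principalHsymm_smul (hq : 0 < q) (r : ℕ) (s t z : ℂ)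
    (h : Summable fun N => ‖principalHsymm q⁻¹ r N • zetaQTerm q s t z N‖) :
    zetaQ q r s t z = ∑' N, principalHsymm q⁻¹ r N • zetaQTerm q s t z N := by
  simp only [zetaQ, cpow_sum_div_qNum_cpow hq.ne']
  exact tsum_smul_comp_eq_tsum_sum_smul Finset.Nat.mem_antidiagonalTuple (fun f => by positivity) h

theorem zetaQ_eq_sum_Pq_zetaQ_one_general (hq0 : 0 < q) (hq1 : q < 1) {r : ℕ} (hr : 1 ≤ r)
    (s : ℂ) {t z : ℂ} (ht : (r : ℝ) - 1 < t.re) (hz : ∀ N : ℕ, qNum q (N + z) ≠ 0) :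
    (∀ l < r, Summable fun N => ‖zetaQTerm q (s - l) (t - l) z N‖) ∧
    zetaQ q r s t z =
      ∑ l ∈ Finset.range r, Pq q r l z * ∑' N, zetaQTerm q (s - l) (t - l) z N := by
  obtain ⟨n, rfl⟩ : ∃ n, r = n + 1 := Nat.exists_eq_add_of_le' hr
  have hterm (l : ℕ) (hl : l < n + 1) : Summable fun N => ‖zetaQTerm q (s - l) (t - l) z N‖ := by
    refine summable_norm_zetaQTerm hq0 hq1 _ _ ?_
    have : (l : ℝ) ≤ n := mod_cast Nat.lt_succ_iff.1 hl
    push_cast at ht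
    simp only [sub_re, natCast_re]
    linarith
  have hmul : ∀ l ∈ Finset.range (n + 1),
      Summable fun N => Pq q (n + 1) l z * zetaQTerm q (s - l) (t - l) z N :=
    fun l hl => (hterm l (Finset.mem_range.1 hl)).of_norm.mul_left _
  have hcollect (N : ℕ) := principalHsymm_smul_zetaQTerm hq0 hq1 (hz N) n s t
  refine ⟨hterm, ?_⟩
  rw [zetaQ_eq_tsum_principalHsymm_smul hq0 _ _ _ _
    (by simpa only [hcollect] using (summable_sum hmul).norm)]
  simp only [hcollect]
  rw [Summable.tsum_finsetSum hmul]
  exact Finset.sum_congr rfl fun l _ => tsum_mul_left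

end ZetaQ

/-- For `0 < q < 1`, `r ≥ 1`, `Re t > r − 1`, `Re z > 0`:
`ζ_{q,r}(s,t,z) = ∑_{l=0}^{r−1} P^l_{q,r}(z) ζ_{q,1}(s−l, t−l, z)`,
where each series `ζ_{q,1}(s−l,t−l,z) = ∑_{n≥0} q^{n(t−l)}/[n+z]_q^{s−l}`
converges absolutely (since `Re(t−l) > 0`). -/
theorem zetaQ_eq_sum_Pq_zetaQ_one (q : ℝ) (hq0 : 0 < q) (hq1 : q < 1) (r : ℕ) (hr : 1 ≤ r)
    (s t z : ℂ) (ht : (r : ℝ) - 1 < t.re) (hz : 0 < z.re) :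
    (∀ l < r, Summable (fun n : ℕ =>
      ‖(q : ℂ) ^ ((n : ℂ) * (t - (l : ℂ))) / (qNum q ((n : ℂ) + z)) ^ (s - (l : ℂ))‖)) ∧
    zetaQ q r s t z
      = ∑ l ∈ Finset.range r, Pq q r l z *
          ∑' n : ℕ, (q : ℂ) ^ ((n : ℂ) * (t - (l : ℂ))) / (qNum q ((n : ℂ) + z)) ^ (s - (l : ℂ)) :=
  zetaQ_eq_sum_Pq_zetaQ_one_general hq0 hq1 hr s ht fun N =>
    qNum_ne_zero hq0 hq1 (by simpa using add_pos_of_nonneg_of_pos N.cast_nonneg hz)
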